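/- Fix an integer d ≥ 1, m > 0 and points x, y ∈ ℝ^d with x ≠ y. Then lim_{a→0⁺} a² Σ_{N=1}^∞ (2π a² N)^{−d/2} exp(−|x−y|²/(2a²N) − m²a²N/2) = ∫_0^∞ (2πT)^{−d/2} exp(−|x−y|²/(2T) − m²T/2) dT. (Convergence of the piecewise-linear discrete propagator H^a(x,y) to the Euclidean propagator G(x,y).) -/

import Mathlib

open MeasureTheory Filter Topology Real Set

/-!
With `h = a²` and `f T` the proper-time integrand, `H^a(x, y)` is the right Riemann sum
`h • ∑ f (h (N + 1))`, that is, the integral over `(0, ∞)` of the step function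
`t ↦ f (h (⌊t / h⌋₊ + 1))`. Its sample points lie to the right of `t` and converge to it, so an
integrable antitone bound of `f` also dominates all the step functions, and dominated convergence
applies. For the proper-time integrand such a bound is a multiple of `min (t ^ α) (t ^ β)` with
`-1 < α ≤ 0` and `β < -1`: small times are controlled by `|x - y|` or by the dimension being `1`,
large times by the mass or by the dimension being at least `3`.
-/

section RiemannSum

variable {E : Type*} [NormedAddCommGroup E] {B : ℝ → ℝ} {h t : ℝ}

theorem map_natFloor_volume_restrict_Ioi :
    (volume.restrict (Ioi (0 : ℝ))).map Nat.floor = Measure.count := by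
  refine Measure.ext_of_singleton fun n => ?_
  rw [Measure.count_singleton, Measure.map_apply Nat.measurable_floor (measurableSet_singleton n),
    Measure.restrict_apply (Nat.measurable_floor (measurableSet_singleton n))]
  rcases eq_or_ne n 0 with rfl | hn
  · rw [Nat.preimage_floor_zero, inter_comm, Ioi_inter_Iio]
    simp
  · have Ico_subset : Ico (n : ℝ) (n + 1) ⊆ Ioi 0 := fun t ht =>
      (Nat.cast_pos.2 hn.bot_lt).trans_le ht.1
    simp [Nat.preimage_floor_of_ne_zero hn, inter_eq_left.2 Ico_subset]

theorem integral_Ioi_comp_natFloor_div [NormedSpace ℝ E] [CompleteSpace E] {g : ℕ → E} (hh : 0 < h)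
    (hg : IntegrableOn (fun t : ℝ => g ⌊t / h⌋₊) (Ioi 0)) :
    ∫ t in Ioi (0 : ℝ), g ⌊t / h⌋₊ = h • ∑' N, g N := by
  have g_meas : AEStronglyMeasurable g Measure.count := .of_discrete
  have integrable_floor : IntegrableOn (fun t : ℝ => g ⌊t⌋₊) (Ioi 0) := by
    rw [← mul_zero h, ← integrableOn_Ioi_comp_mul_left_iff _ _ hh] at hg
    simpa only [mul_div_cancel_left₀ _ hh.ne'] using hg
  have integrable_count : Integrable g Measure.count := by
    rw [← map_natFloor_volume_restrict_Ioi] at g_meas ⊢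
    exact (integrable_map_measure g_meas Nat.measurable_floor.aemeasurable).2 integrable_floor
  calc ∫ t in Ioi (0 : ℝ), g ⌊t / h⌋₊
      = h • ∫ t in Ioi (0 : ℝ), g ⌊t⌋₊ := by
        have := integral_comp_mul_left_Ioi' (fun t : ℝ => g ⌊t / h⌋₊) 0 hh
        simpa only [mul_div_cancel_left₀ _ hh.ne', mul_zero] using this.symm
    _ = h • ∫ N, g N ∂Measure.count := by
        rw [← map_natFloor_volume_restrict_Ioi] at g_meas ⊢
        rw [integral_map Nat.measurable_floor.aemeasurable g_meas]
    _ = h • ∑' N, g N := by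
        simp [integral_countable integrable_count]

theorem lt_mul_natFloor_div_add_one (hh : 0 < h) : t < h * (⌊t / h⌋₊ + 1) :=
  (div_lt_iff₀' hh).1 (Nat.lt_floor_add_one _)

theorem mul_natFloor_div_add_one_le (hh : 0 < h) (ht : 0 ≤ t) : h * (⌊t / h⌋₊ + 1) ≤ t + h := by
  have := (le_div_iff₀' hh).1 (Nat.floor_le (div_nonneg ht hh.le))
  linarith

theorem tendsto_mul_natFloor_div_add_one (ht : 0 ≤ t) :
    Tendsto (fun h : ℝ => h * (⌊t / h⌋₊ + 1)) (𝓝[>] 0) (𝓝 t) := by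
  have upper : Tendsto (fun h : ℝ => t + h) (𝓝[>] 0) (𝓝 t) :=
    ((continuous_const_add t).tendsto' 0 t (add_zero t)).mono_left nhdsWithin_le_nhds
  refine tendsto_of_tendsto_of_tendsto_of_le_of_le' tendsto_const_nhds upper ?_ ?_
  · filter_upwards [self_mem_nhdsWithin] with h hh using (lt_mul_natFloor_div_add_one hh).le
  · filter_upwards [self_mem_nhdsWithin] with h hh using mul_natFloor_div_add_one_le hh ht

theorem stronglyMeasurable_comp_mul_natFloor_div_add_one (f : ℝ → E) (h : ℝ) :
    StronglyMeasurable fun t : ℝ => f (h * (⌊t / h⌋₊ + 1)) :=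
  (StronglyMeasurable.of_discrete (f := fun N : ℕ => f (h * (N + 1)))).comp_measurable
    (Nat.measurable_floor.comp (measurable_id.div_const h))

theorem norm_comp_mul_natFloor_div_add_one_le {f : ℝ → E} (hfB : ∀ t, 0 < t → ‖f t‖ ≤ B t)
    (hB : AntitoneOn B (Ioi 0)) (hh : 0 < h) (ht : 0 < t) :
    ‖f (h * (⌊t / h⌋₊ + 1))‖ ≤ B t :=
  have lt_sample := lt_mul_natFloor_div_add_one (t := t) hh
  (hfB _ (ht.trans lt_sample)).trans (hB ht (ht.trans lt_sample) lt_sample.le)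

theorem tendsto_riemannSum_Ioi_of_norm_le_antitoneOn [NormedSpace ℝ E] [CompleteSpace E]
    {f : ℝ → E} (hf : ∀ᵐ t ∂volume.restrict (Ioi 0), ContinuousAt f t)
    (hfB : ∀ t, 0 < t → ‖f t‖ ≤ B t) (hB : AntitoneOn B (Ioi 0))
    (hB_int : IntegrableOn B (Ioi 0)) :
    Tendsto (fun h : ℝ => h • ∑' N : ℕ, f (h * (N + 1))) (𝓝[>] 0) (𝓝 (∫ t in Ioi 0, f t)) := by
  have meas (h : ℝ) : AEStronglyMeasurable (fun t : ℝ => f (h * (⌊t / h⌋₊ + 1)))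
      (volume.restrict (Ioi 0)) :=
    (stronglyMeasurable_comp_mul_natFloor_div_add_one f h).aestronglyMeasurable
  have bound : ∀ h > 0, ∀ᵐ t ∂volume.restrict (Ioi 0), ‖f (h * (⌊t / h⌋₊ + 1))‖ ≤ B t :=
    fun h hh => ae_restrict_of_forall_mem measurableSet_Ioi fun t ht =>
      norm_comp_mul_natFloor_div_add_one_le hfB hB hh ht
  have tendsto_integral_step :
      Tendsto (fun h : ℝ => ∫ t in Ioi (0 : ℝ), f (h * (⌊t / h⌋₊ + 1))) (𝓝[>] 0)
        (𝓝 (∫ t in Ioi 0, f t)) := by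
    refine tendsto_integral_filter_of_dominated_convergence B (.of_forall meas)
      (eventually_mem_nhdsWithin.mono bound) hB_int ?_
    filter_upwards [hf, ae_restrict_mem measurableSet_Ioi] with t ht_cont ht
    exact ht_cont.tendsto.comp (tendsto_mul_natFloor_div_add_one (le_of_lt ht))
  refine tendsto_integral_step.congr' (eventually_mem_nhdsWithin.mono fun h hh => ?_)
  exact integral_Ioi_comp_natFloor_div (g := fun N : ℕ => f (h * (N + 1))) hh
    (hB_int.mono' (meas h) (bound h hh))

end RiemannSum

section PowerBound

variable {α β : ℝ}

theorem antitoneOn_min_rpow (hα : α ≤ 0) (hβ : β ≤ 0) :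
    AntitoneOn (fun t : ℝ => min (t ^ α) (t ^ β)) (Ioi 0) :=
  (antitoneOn_rpow_Ioi_of_exponent_nonpos hα).min (antitoneOn_rpow_Ioi_of_exponent_nonpos hβ)

theorem integrableOn_Ioi_min_rpow (hα : -1 < α) (hβ : β < -1) :
    IntegrableOn (fun t : ℝ => min (t ^ α) (t ^ β)) (Ioi 0) := by
  have meas : Measurable fun t : ℝ => min (t ^ α) (t ^ β) := by fun_prop
  have norm_eq {t : ℝ} (ht : 0 < t) : ‖min (t ^ α) (t ^ β)‖ = min (t ^ α) (t ^ β) :=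
    norm_of_nonneg (by positivity)
  rw [← Ioc_union_Ioi_eq_Ioi zero_le_one]
  refine IntegrableOn.union ?_ ?_
  · refine Integrable.mono' (g := fun t => t ^ α) ?_ meas.aestronglyMeasurable
      (ae_restrict_of_forall_mem measurableSet_Ioc fun t ht =>
        (norm_eq ht.1).trans_le (min_le_left _ _))
    exact (intervalIntegrable_iff_integrableOn_Ioc_of_le zero_le_one).1
      (intervalIntegral.intervalIntegrable_rpow' hα)
  · exact (integrableOn_Ioi_rpow_of_lt hβ one_pos).mono' meas.aestronglyMeasurable
      (ae_restrict_of_forall_mem measurableSet_Ioi fun t ht =>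
        (norm_eq (one_pos.trans ht)).trans_le (min_le_right _ _))

theorem tendsto_riemannSum_Ioi_of_norm_le_rpow {E : Type*} [NormedAddCommGroup E]
    [NormedSpace ℝ E] [CompleteSpace E] {f : ℝ → E} {C D : ℝ} (hα_gt : -1 < α) (hα : α ≤ 0)
    (hβ : β < -1) (hf : ∀ᵐ t ∂volume.restrict (Ioi 0), ContinuousAt f t)
    (hfα : ∀ t, 0 < t → ‖f t‖ ≤ C * t ^ α) (hfβ : ∀ t, 0 < t → ‖f t‖ ≤ D * t ^ β) :
    Tendsto (fun h : ℝ => h • ∑' N : ℕ, f (h * (N + 1))) (𝓝[>] 0) (𝓝 (∫ t in Ioi 0, f t)) := by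
  have C_nonneg : 0 ≤ C := (norm_nonneg _).trans (by simpa using hfα 1 one_pos)
  refine tendsto_riemannSum_Ioi_of_norm_le_antitoneOn
    (B := fun t => max C D * min (t ^ α) (t ^ β)) hf (fun t ht => ?_) (fun s hs t ht hst => ?_)
    ((integrableOn_Ioi_min_rpow hα_gt hβ).const_mul _)
  · rw [mul_min_of_nonneg _ _ (C_nonneg.trans (le_max_left C D))]
    refine le_min ((hfα t ht).trans ?_) ((hfβ t ht).trans ?_)
    · gcongr
      exact le_max_left C D
    · gcongr
      exact le_max_right C D
  · exact mul_le_mul_of_nonneg_left (antitoneOn_min_rpow hα (by linarith) hs ht hst)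
      (C_nonneg.trans (le_max_left C D))

end PowerBound

theorem rpow_mul_exp_neg_mul_le {s b x : ℝ} (hs : 0 ≤ s) (hb : 0 ≤ b) (hx : 0 ≤ x)
    (hbs : 0 < b ∨ s = 0) : x ^ s * exp (-(b * x)) ≤ (s / b) ^ s := by
  rcases hs.eq_or_lt with rfl | hs
  · simpa using mul_nonneg hb hx
  have hb : 0 < b := hbs.resolve_right hs.ne'
  have rpow_le_exp : (b * x / s) ^ s ≤ exp (b * x) := by
    calc (b * x / s) ^ s ≤ exp (b * x / s) ^ s := by
          gcongr
          linarith [add_one_le_exp (b * x / s)]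
      _ = exp (b * x) := by rw [← exp_mul, div_mul_cancel₀ _ hs.ne']
  calc x ^ s * exp (-(b * x)) = (s / b) ^ s * (b * x / s) ^ s * exp (-(b * x)) := by
        rw [← mul_rpow (by positivity) (by positivity)]
        congr 2
        field_simp
    _ ≤ (s / b) ^ s * exp (b * x) * exp (-(b * x)) := by gcongr
    _ = (s / b) ^ s := by rw [mul_assoc, ← exp_add, add_neg_cancel, exp_zero, mul_one]

theorem exists_rpow_mul_exp_le {q b ν : ℝ} (hb : 0 ≤ b) (hν : 0 ≤ ν) (hbq : 0 < b ∨ 0 ≤ q)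
    (hνq : 0 < ν ∨ q ≤ 0) : ∃ C, ∀ t, 0 < t → t ^ q * exp (-(b / t) - ν * t) ≤ C := by
  rcases le_total 0 q with hq | hq
  · refine ⟨(q / ν) ^ q, fun t ht => le_trans ?_ (rpow_mul_exp_neg_mul_le hq hν ht.le
      (hνq.imp_right fun h => h.antisymm hq))⟩
    gcongr
    linarith [div_nonneg hb ht.le]
  -- The substitution `t ↦ t⁻¹` exchanges the two exponential factors.
  · refine ⟨(-q / b) ^ (-q), fun t ht => le_trans ?_ (rpow_mul_exp_neg_mul_le (x := t⁻¹)
      (neg_nonneg.2 hq) hb (inv_nonneg.2 ht.le) (hbq.imp_right fun h => by linarith))⟩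
    rw [rpow_neg (inv_nonneg.2 ht.le), inv_rpow ht.le, inv_inv, ← div_eq_mul_inv]
    gcongr
    linarith [mul_nonneg hν ht.le]

section ProperTime

variable {p c μ T : ℝ}

/-- The integrand of the proper-time representation: the propagator of a particle of mass `m`
between points of `ℝ^d` at distance `r` has `p = -d / 2`, `c = r ^ 2` and `μ = m ^ 2`. -/
noncomputable def properTimeIntegrand (p c μ T : ℝ) : ℝ :=
  (2 * π * T) ^ p * exp (-c / (2 * T) - μ * T / 2)

theorem properTimeIntegrand_nonneg (hT : 0 ≤ T) : 0 ≤ properTimeIntegrand p c μ T := by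
  unfold properTimeIntegrand
  positivity

theorem continuousAt_properTimeIntegrand (hT : 0 < T) :
    ContinuousAt (properTimeIntegrand p c μ) T := by
  have two_mul_ne_zero : 2 * T ≠ 0 := by positivity
  have base_ne_zero : 2 * π * T ≠ 0 := by positivity
  unfold properTimeIntegrand
  fun_prop (disch := simp [*])

theorem exists_properTimeIntegrand_le_mul_rpow {r : ℝ} (hc : 0 ≤ c) (hμ : 0 ≤ μ)
    (hcr : 0 < c ∨ r ≤ p) (hμr : 0 < μ ∨ p ≤ r) :
    ∃ C, ∀ T, 0 < T → properTimeIntegrand p c μ T ≤ C * T ^ r := by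
  obtain ⟨C, hC⟩ := exists_rpow_mul_exp_le (q := p - r) (by positivity) (by positivity)
    (hcr.imp half_pos sub_nonneg.2) (hμr.imp half_pos sub_nonpos.2)
  refine ⟨(2 * π) ^ p * C, fun T hT => ?_⟩
  calc properTimeIntegrand p c μ T
      = (2 * π) ^ p * (T ^ (p - r) * exp (-(c / 2 / T) - μ / 2 * T)) * T ^ r := by
        have exponent_eq : -c / (2 * T) - μ * T / 2 = -(c / 2 / T) - μ / 2 * T := by
          field_simp
        rw [properTimeIntegrand, exponent_eq, mul_rpow (by positivity) hT.le, rpow_sub hT]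
        field_simp
    _ ≤ (2 * π) ^ p * C * T ^ r := by
        gcongr
        exact hC T hT

theorem exists_properTimeIntegrand_le_mul_rpow_neg_one_lt (hc : 0 ≤ c) (hμ : 0 ≤ μ)
    (hcp : 0 < c ∨ -1 < p) (hμp : 0 < μ ∨ p < -1) :
    ∃ α : ℝ, -1 < α ∧ α ≤ 0 ∧ ∃ C, ∀ T, 0 < T → properTimeIntegrand p c μ T ≤ C * T ^ α := by
  rcases hcp with hc_pos | hp
  · exact ⟨0, by norm_num, le_rfl, exists_properTimeIntegrand_le_mul_rpow hc hμ (.inl hc_pos)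
      (hμp.imp_right fun hp => by linarith)⟩
  · exact ⟨min p 0, lt_min hp (by norm_num), min_le_right _ _,
      exists_properTimeIntegrand_le_mul_rpow hc hμ (.inr (min_le_left _ _))
        (hμp.imp_right fun hp' => absurd hp' hp.not_gt)⟩

theorem exists_properTimeIntegrand_le_mul_rpow_lt_neg_one (hc : 0 ≤ c) (hμ : 0 ≤ μ)
    (hμp : 0 < μ ∨ p < -1) :
    ∃ β : ℝ, β < -1 ∧ ∃ D, ∀ T, 0 < T → properTimeIntegrand p c μ T ≤ D * T ^ β := by
  rcases hμp with hμ_pos | hp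
  · exact ⟨min p (-2), (min_le_right _ _).trans_lt (by norm_num),
      exists_properTimeIntegrand_le_mul_rpow hc hμ (.inr (min_le_left _ _)) (.inl hμ_pos)⟩
  · exact ⟨p, hp, exists_properTimeIntegrand_le_mul_rpow hc hμ (.inr le_rfl) (.inr le_rfl)⟩

theorem tendsto_riemannSum_properTimeIntegrand (hc : 0 ≤ c) (hμ : 0 ≤ μ)
    (hcp : 0 < c ∨ -1 < p) (hμp : 0 < μ ∨ p < -1) :
    Tendsto (fun h : ℝ => h * ∑' N : ℕ, properTimeIntegrand p c μ (h * (N + 1))) (𝓝[>] 0)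
      (𝓝 (∫ T in Ioi 0, properTimeIntegrand p c μ T)) := by
  obtain ⟨α, hα_gt, hα, C, hC⟩ :=
    exists_properTimeIntegrand_le_mul_rpow_neg_one_lt hc hμ hcp hμp
  obtain ⟨β, hβ, D, hD⟩ := exists_properTimeIntegrand_le_mul_rpow_lt_neg_one hc hμ hμp
  have norm_eq {T : ℝ} (hT : 0 < T) : ‖properTimeIntegrand p c μ T‖ = properTimeIntegrand p c μ T :=
    norm_of_nonneg (properTimeIntegrand_nonneg hT.le)
  exact tendsto_riemannSum_Ioi_of_norm_le_rpow hα_gt hα hβ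
    (ae_restrict_of_forall_mem measurableSet_Ioi fun T hT => continuousAt_properTimeIntegrand hT)
    (fun T hT => (norm_eq hT).trans_le (hC T hT)) (fun T hT => (norm_eq hT).trans_le (hD T hT))

end ProperTime

theorem tendsto_sq_nhdsGT_zero : Tendsto (fun a : ℝ => a ^ 2) (𝓝[>] 0) (𝓝[>] 0) := by
  refine tendsto_nhdsWithin_iff.2
    ⟨?_, eventually_mem_nhdsWithin.mono fun a ha => mem_Ioi.2 (pow_pos ha 2)⟩
  exact ((continuous_pow 2).tendsto' 0 0 (by norm_num)).mono_left nhdsWithin_le_nhds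

theorem discrete_propagator_tendsto_continuum_general
    {E : Type*} [SeminormedAddCommGroup E] {p m : ℝ} {x y : E}
    (hxy : ‖x - y‖ ≠ 0 ∨ -1 < p) (hm : m ≠ 0 ∨ p < -1) :
    Tendsto
      (fun a : ℝ => a ^ 2 * ∑' N : ℕ,
        (2 * π * a ^ 2 * ((N : ℝ) + 1)) ^ p *
          exp (-‖x - y‖ ^ 2 / (2 * a ^ 2 * ((N : ℝ) + 1)) - m ^ 2 * a ^ 2 * ((N : ℝ) + 1) / 2))
      (𝓝[>] 0)
      (𝓝 (∫ T in Ioi (0 : ℝ),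
        (2 * π * T) ^ p * exp (-‖x - y‖ ^ 2 / (2 * T) - m ^ 2 * T / 2))) := by
  simpa only [Function.comp_def, properTimeIntegrand, mul_assoc] using
    (tendsto_riemannSum_properTimeIntegrand (sq_nonneg ‖x - y‖) (sq_nonneg m)
      (hxy.imp_left sq_pos_of_ne_zero) (hm.imp_left sq_pos_of_ne_zero)).comp tendsto_sq_nhdsGT_zero

/-- **Convergence of the piecewise-linear discrete propagator to the Euclidean propagator.**
For `d ≥ 1`, `m > 0` and `x ≠ y` in `ℝ^d`,
`H^a(x,y) = a² Σ_{N=1}^∞ (2π a² N)^{−d/2} exp(−|x−y|²/(2a²N) − m²a²N/2)`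
converges, as `a → 0⁺`, to
`G(x,y) = ∫_0^∞ (2πT)^{−d/2} exp(−|x−y|²/(2T) − m²T/2) dT`. -/
theorem discrete_propagator_tendsto_continuum
    (d : ℕ) (hd : 1 ≤ d) (m : ℝ) (hm : 0 < m)
    (x y : EuclideanSpace ℝ (Fin d)) (hxy : x ≠ y) :
    Tendsto
      (fun a : ℝ => a ^ 2 * ∑' N : ℕ,
        (2 * π * a ^ 2 * ((N : ℝ) + 1)) ^ (-(d : ℝ) / 2) *
          Real.exp (-‖x - y‖ ^ 2 / (2 * a ^ 2 * ((N : ℝ) + 1))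
            - m ^ 2 * a ^ 2 * ((N : ℝ) + 1) / 2))
      (nhdsWithin 0 (Set.Ioi 0))
      (nhds (∫ T in Set.Ioi (0 : ℝ),
        (2 * π * T) ^ (-(d : ℝ) / 2) *
          Real.exp (-‖x - y‖ ^ 2 / (2 * T) - m ^ 2 * T / 2))) :=
  discrete_propagator_tendsto_continuum_general (.inl (norm_sub_eq_zero_iff.not.2 hxy))
    (.inl hm.ne')
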